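/- There is a computable map assigning to each tiling system 𝒞 = (C, C_H, C_V) a sentence η_𝒞 of FL² with equality and two distinguished transitive relations such that: η_𝒞 is satisfiable (with both distinguished relations transitive) iff 𝒞 tiles ℤ × ℤ, and η_𝒞 is finitely satisfiable iff 𝒞 tiles the torus ℤ_t × ℤ_t for some t ≥ 1. -/

import Mathlib

/- STATEMENT 17: Reduction of the ℤ×ℤ (and torus) tiling problems to (finite)
satisfiability of the two-variable fluted fragment with equality and two
distinguished transitive relations. -/

namespace FlutedTwoTransEq

/-- FL²-formulas with equality over countably many unary predicates (indexed by `ℕ`)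
and two distinguished binary predicates (indexed by `Fin 2`); the index `m ≤ 2` records
that the free variables form a suffix of `x₁, …, x_m`, all atoms ending at the last
variable, and only the last variable may be quantified. -/
inductive F : ℕ → Type
  | patom (p : ℕ) {m : ℕ} (h1 : 1 ≤ m) (h2 : m ≤ 2) : F m
  | batom (k : Fin 2) : F 2
  | eqatom : F 2
  | fls {m : ℕ} (h : m ≤ 2) : F m
  | not {m : ℕ} (φ : F m) : F m
  | and {m : ℕ} (φ ψ : F m) : F m
  | or {m : ℕ} (φ ψ : F m) : F m
  | imp {m : ℕ} (φ ψ : F m) : F m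
  | ex {m : ℕ} (h : m ≤ 1) (φ : F (m + 1)) : F m
  | all {m : ℕ} (h : m ≤ 1) (φ : F (m + 1)) : F m

/-- A structure interpreting the unary predicates and the two distinguished binary
predicates. -/
structure Str (A : Type) where
  U : ℕ → A → Prop
  T : Fin 2 → A → A → Prop

def Sat {A : Type} (M : Str A) : ∀ {m : ℕ}, F m → (Fin m → A) → Prop
  | m, .patom p h1 _, v => M.U p (v ⟨m - 1, by omega⟩)
  | _, .batom k, v => M.T k (v 0) (v 1)
  | _, .eqatom, v => v 0 = v 1
  | _, .fls _, _ => False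
  | _, .not φ, v => ¬ Sat M φ v
  | _, .and φ ψ, v => Sat M φ v ∧ Sat M ψ v
  | _, .or φ ψ, v => Sat M φ v ∨ Sat M ψ v
  | _, .imp φ ψ, v => Sat M φ v → Sat M ψ v
  | _, .ex _ φ, v => ∃ a : A, Sat M φ (Fin.snoc v a)
  | _, .all _ φ, v => ∀ a : A, Sat M φ (Fin.snoc v a)

/-- `φ` has a model in which both distinguished binary relations are transitive. -/
def Satisfiable (φ : F 0) : Prop :=
  ∃ (A : Type) (_ : Nonempty A) (M : Str A),
    (∀ k, Transitive (M.T k)) ∧ Sat M φ (fun i => i.elim0)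

/-- `φ` has a finite model in which both distinguished binary relations are
transitive. -/
def FinitelySatisfiable (φ : F 0) : Prop :=
  ∃ (A : Type) (_ : Nonempty A) (_ : Finite A) (M : Str A),
    (∀ k, Transitive (M.T k)) ∧ Sat M φ (fun i => i.elim0)

/-- A concrete Gödel numbering of FL²-formulas with equality. -/
def encode : ∀ {m : ℕ}, F m → ℕ
  | _, .patom p _ _ => Nat.pair 0 p
  | _, .batom k => Nat.pair 1 k.val
  | _, .eqatom => Nat.pair 2 0
  | _, .fls _ => Nat.pair 3 0
  | _, .not φ => Nat.pair 4 (encode φ)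
  | _, .and φ ψ => Nat.pair 5 (Nat.pair (encode φ) (encode ψ))
  | _, .or φ ψ => Nat.pair 6 (Nat.pair (encode φ) (encode ψ))
  | _, .imp φ ψ => Nat.pair 7 (Nat.pair (encode φ) (encode ψ))
  | _, .ex _ φ => Nat.pair 8 (encode φ)
  | _, .all _ φ => Nat.pair 9 (encode φ)

/-- A tiling system: a finite set of tiles `Fin n` together with horizontal and
vertical constraints. -/
structure TileSys where
  n : ℕ
  H : Fin n → Fin n → Bool
  V : Fin n → Fin n → Bool

/-- `𝒞` tiles `ℤ × ℤ`. -/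
def TileSys.TilesZ (T : TileSys) : Prop :=
  ∃ ρ : ℤ × ℤ → Fin T.n, ∀ p q : ℤ,
    T.H (ρ (p, q)) (ρ (p + 1, q)) = true ∧ T.V (ρ (p, q)) (ρ (p, q + 1)) = true

/-- `𝒞` tiles the torus `ℤ_t × ℤ_t`. -/
def TileSys.TilesTorus (T : TileSys) (t : ℕ) : Prop :=
  ∃ ρ : ZMod t × ZMod t → Fin T.n, ∀ p q : ZMod t,
    T.H (ρ (p, q)) (ρ (p + 1, q)) = true ∧ T.V (ρ (p, q)) (ρ (p, q + 1)) = true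

/-- A concrete Gödel numbering of tiling systems. -/
def TileSys.encode (T : TileSys) : ℕ :=
  Nat.pair T.n
    (Nat.pair (∑ i : Fin T.n, ∑ j : Fin T.n,
        if T.H i j then 2 ^ (i.val * T.n + j.val) else 0)
      (∑ i : Fin T.n, ∑ j : Fin T.n,
        if T.V i j then 2 ^ (i.val * T.n + j.val) else 0))

/-- typing of coordinates -/
def par (i : ZMod 8) : Fin 2 := Fin.ofNat 2 i.val

/-- direction selector -/
def dirL (i : ZMod 8) : Prop := i.val % 4 = 1 ∨ i.val % 4 = 2

instance (i : ZMod 8) : Decidable (dirL i) := by unfold dirL; infer_instance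

/-- abstract grid axioms -/
structure Grid {A : Type} (U : ZMod 8 → ZMod 8 → A → Prop) (T : Fin 2 → A → A → Prop) : Prop where
  tr : ∀ k x y z, T k x y → T k y z → T k x z
  ini : ∃ x, U 0 0 x
  hs : ∀ i j x, U i j x → ∃ y, U (i+1) j y ∧ T (par i) x y
  hb : ∀ i j x, U (i+1) j x → ∃ y, U i j y ∧ T (par i) x y
  vs : ∀ i j x, U i j x → ∃ y, U i (j+1) y ∧ T (par j) x y
  vb : ∀ i j x, U i (j+1) x → ∃ y, U i j y ∧ T (par j) x y
  an : ∀ k i j x, U i j x → ∀ y, U i j y → T k x y → x = y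
  t1 : ∀ i j, par i ≠ par j → dirL i → ∀ x, U (i+1) j x → ∀ y, U i j y → T (par i) x y →
    T (par j) x y
  t2 : ∀ i j, par i ≠ par j → dirL i → ∀ x, U (i+1) (j+1) x → ∀ y, U i (j+1) y →
    T (par j) x y → T (par i) x y
  t3 : ∀ i j, par i ≠ par j → ¬ dirL i → ∀ x, U i j x → ∀ y, U (i+1) j y → T (par i) x y →
    T (par j) x y
  t4 : ∀ i j, par i ≠ par j → ¬ dirL i → ∀ x, U i (j+1) x → ∀ y, U (i+1) (j+1) y →
    T (par j) x y → T (par i) x y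

theorem Grid.maps {A : Type} {U : ZMod 8 → ZMod 8 → A → Prop} {T : Fin 2 → A → A → Prop}
    (G : Grid U T) :
    ∃ h v : {w : (ZMod 8 × ZMod 8) × A // U w.1.1 w.1.2 w.2} →
        {w : (ZMod 8 × ZMod 8) × A // U w.1.1 w.1.2 w.2},
      (∀ w, h (v w) = v (h w)) ∧
      (∀ w, (h w).1.1 = (w.1.1.1 + 1, w.1.1.2) ∧ T (par w.1.1.1) w.1.2 (h w).1.2) ∧
      (∀ w, (v w).1.1 = (w.1.1.1, w.1.1.2 + 1) ∧ T (par w.1.1.2) w.1.2 (v w).1.2) := by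
  choose! hf hf1 hf2 using G.hs
  choose! vf vf1 vf2 using G.vs
  have hbk : ∀ i j x, U i j x → T (par i) (hf i j x) x := by
    intro i j x hx
    obtain ⟨y, hy, hT⟩ := G.hb i j _ (hf1 i j x hx)
    have := G.an (par i) i j x hx y hy (G.tr _ _ _ _ (hf2 i j x hx) hT)
    subst this; exact hT
  have vbk : ∀ i j x, U i j x → T (par j) (vf i j x) x := by
    intro i j x hx
    obtain ⟨y, hy, hT⟩ := G.vb i j _ (vf1 i j x hx)
    have := G.an (par j) i j x hx y hy (G.tr _ _ _ _ (vf2 i j x hx) hT)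
    subst this; exact hT
  have comm : ∀ i j x, U i j x → hf i (j+1) (vf i j x) = vf (i+1) j (hf i j x) := by
    intro i j a ha
    have hb := hf1 i j a ha
    have hc := vf1 i j a ha
    have hd := vf1 _ _ _ hb
    have hd' := hf1 _ _ _ hc
    have ab := hf2 i j a ha
    have ba := hbk i j a ha
    have ac := vf2 i j a ha
    have ca := vbk i j a ha
    have bd := vf2 _ _ _ hb
    have db := vbk _ _ _ hb
    have cd := hf2 _ _ _ hc
    have dc := hbk _ _ _ hc
    by_cases hp : par i = par j
    · rw [hp] at ab ba cd dc
      exact G.an _ _ _ _ hd' _ hd (G.tr _ _ _ _ dc (G.tr _ _ _ _ ca (G.tr _ _ _ _ ab bd)))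
    · by_cases hl : dirL i
      · have h1 := G.t1 i j hp hl _ hb _ ha ba
        have h2 := G.t2 i j hp hl _ hd _ hc (G.tr _ _ _ _ db (G.tr _ _ _ _ h1 ac))
        exact (G.an _ _ _ _ hd _ hd' (G.tr _ _ _ _ h2 cd)).symm
      · have h1 := G.t3 i j hp hl _ ha _ hb ab
        have h2 := G.t4 i j hp hl _ hc _ hd (G.tr _ _ _ _ ca (G.tr _ _ _ _ h1 bd))
        exact G.an _ _ _ _ hd' _ hd (G.tr _ _ _ _ dc h2)
  refine ⟨fun w => ⟨((w.1.1.1 + 1, w.1.1.2), hf w.1.1.1 w.1.1.2 w.1.2), hf1 _ _ _ w.2⟩,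
    fun w => ⟨((w.1.1.1, w.1.1.2 + 1), vf w.1.1.1 w.1.1.2 w.1.2), vf1 _ _ _ w.2⟩, ?_, ?_, ?_⟩
  · intro w
    apply Subtype.ext
    simp only [Prod.mk.injEq, true_and]
    exact comm _ _ _ w.2
  · intro w; exact ⟨rfl, hf2 _ _ _ w.2⟩
  · intro w; exact ⟨rfl, vf2 _ _ _ w.2⟩

theorem tilesZ_of_maps (T : TileSys) {B : Type} (b : B) (h v : B → B)
    (hv : ∀ w, h (v w) = v (h w)) (tl : B → Fin T.n)
    (hH : ∀ w, T.H (tl w) (tl (h w)) = true) (hV : ∀ w, T.V (tl w) (tl (v w)) = true) :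
    T.TilesZ := by
  classical
  let r : ℤ → ℤ → ℕ → Fin T.n := fun p q n => tl (h^[(p + n).toNat] (v^[(q + n).toNat] b))
  have key : ∀ p q, ∃ c, ∀ᶠ n in (Filter.hyperfilter ℕ : Filter ℕ), r p q n = c := by
    intro p q
    have : ∀ᶠ n in (Filter.hyperfilter ℕ : Filter ℕ), ∃ c, r p q n = c := by simp
    rwa [Ultrafilter.eventually_exists_iff] at this
  choose ρ hρ using key
  have large : ∀ p : ℤ, ∀ᶠ n : ℕ in (Filter.hyperfilter ℕ : Filter ℕ), 0 ≤ p + n := by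
    intro p
    have : ∀ᶠ n : ℕ in Filter.atTop, 0 ≤ p + n := by
      filter_upwards [Filter.eventually_ge_atTop p.natAbs] with n hn
      omega
    rw [← Nat.cofinite_eq_atTop] at this
    exact Filter.hyperfilter_le_cofinite this
  refine ⟨fun w => ρ w.1 w.2, fun p q => ⟨?_, ?_⟩⟩
  · obtain ⟨n, h1, h2, h3⟩ := ((hρ p q).and ((hρ (p+1) q).and (large p))).exists
    simp only
    rw [← h1, ← h2]
    have : (p + 1 + (n:ℤ)).toNat = (p + n).toNat + 1 := by omega
    simp only [r, this, Function.iterate_succ_apply']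
    exact hH _
  · obtain ⟨n, h1, h2, h3⟩ := ((hρ p q).and ((hρ p (q+1)).and (large q))).exists
    simp only
    rw [← h1, ← h2]
    have : (q + 1 + (n:ℤ)).toNat = (q + n).toNat + 1 := by omega
    have hc : Function.Commute h v := hv
    simp only [r, this, Function.iterate_succ_apply']
    rw [(hc.iterate_left _).eq]
    exact hV _

theorem exists_idem {M : Type} [Monoid M] [Finite M] (f : M) :
    ∃ k, 1 ≤ k ∧ f ^ k * f ^ k = f ^ k := by
  obtain ⟨a, b, hne, hab⟩ := Finite.exists_ne_map_eq_of_infinite (fun n : ℕ => f ^ n)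
  wlog hlt : a < b generalizing a b
  · exact this b a hne.symm hab.symm (by omega)
  obtain ⟨p, rfl⟩ := Nat.exists_eq_add_of_lt hlt
  have step : ∀ c, f ^ (a + c) = f ^ (a + c + (p + 1)) := by
    intro c
    rw [pow_add, hab, ← pow_add]; congr 1; omega
  have step2 : ∀ m c, f ^ (a + c) = f ^ (a + c + m * (p + 1)) := by
    intro m
    induction m with
    | zero => simp
    | succ m ih =>
      intro c
      rw [ih c, show a + c + m * (p+1) = a + (c + m * (p+1)) by ring, step]
      congr 1; ring
  refine ⟨(a + 1) * (p + 1), Nat.mul_pos (by omega) (by omega), ?_⟩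
  rw [← pow_add]
  have h := step2 (a + 1) (a * p + p + 1)
  rw [show a + (a * p + p + 1) = (a+1) * (p+1) by ring] at h
  exact h.symm

theorem torus_of_maps (T : TileSys) {B : Type} [Finite B] (b : B) (h v : B → B)
    (hv : ∀ w, h (v w) = v (h w)) (tl : B → Fin T.n)
    (hH : ∀ w, T.H (tl w) (tl (h w)) = true) (hV : ∀ w, T.V (tl w) (tl (v w)) = true) :
    ∃ t, 1 ≤ t ∧ T.TilesTorus t := by
  have : Finite (Function.End B) := inferInstanceAs (Finite (B → B))
  obtain ⟨k1, hk1, e1⟩ := exists_idem (M := Function.End B) h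
  obtain ⟨k2, hk2, e2⟩ := exists_idem (M := Function.End B) v
  have it : ∀ (f : B → B) n, (show Function.End B from f) ^ n = (f^[n] : B → B) := by
    intro f n
    induction n with
    | zero => rfl
    | succ n ih => rw [pow_succ, ih, Function.iterate_succ]; rfl
  have mk : ∀ (f : B → B) k l, 1 ≤ l → (show Function.End B from f)^k * (show Function.End B from f)^k
      = (show Function.End B from f)^k → ∀ w, f^[k*l] (f^[k*l] w) = f^[k*l] w := by
    intro f k l hl he w
    have : IsIdempotentElem ((show Function.End B from f)^k) := he
    have h2 := this.pow l
    rw [← pow_mul] at h2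
    have h3 := h2.eq
    rw [it] at h3
    exact congrFun h3 w
  let t := k1 * k2
  have ht : 1 ≤ t := Nat.mul_pos hk1 hk2
  have H1 : ∀ w, h^[t] (h^[t] w) = h^[t] w := mk h k1 k2 hk2 e1
  have V1 : ∀ w, v^[t] (v^[t] w) = v^[t] w := by
    have := mk v k2 k1 hk1 e2
    rwa [mul_comm] at this
  have hc : Function.Commute h v := hv
  let x := h^[t] (v^[t] b)
  have hx : h^[t] x = x := H1 _
  have vx : v^[t] x = x := by
    simp only [x]
    rw [← ((hc.iterate_left t).iterate_right t).eq, V1]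
  have : NeZero t := ⟨by omega⟩
  have hm : ∀ (f : B → B) w, f^[t] w = w → ∀ p : ZMod t, f^[(p+1).val] w = f (f^[p.val] w) := by
    intro f w hw p
    have : Function.IsPeriodicPt f t w := hw
    rw [← Function.iterate_succ_apply' f, ← this.iterate_mod_apply (p.val + 1), ZMod.val_add, ZMod.val_one_eq_one_mod]
    simp
  refine ⟨t, ht, fun w => tl (h^[w.1.val] (v^[w.2.val] x)), fun p q => ⟨?_, ?_⟩⟩
  · simp only
    rw [hm h]
    · exact hH _
    · rw [((hc.iterate_left t).iterate_right _).eq, hx]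
  · simp only
    rw [hm v x vx, (hc.iterate_left _).eq]
    exact hV _
/-- block-compatibility table for horizontal coordinates -/
def RX (k : Fin 2) (i j : ZMod 8) : Prop :=
  (i - (k.val : ZMod 8)).val / 2 = (j - (k.val : ZMod 8)).val / 2 ∨
    ((i - (k.val : ZMod 8)).val / 2 % 2 = 1 ∧ (j - (k.val : ZMod 8)).val / 2 % 2 = 0)

instance (k : Fin 2) (i j : ZMod 8) : Decidable (RX k i j) := by unfold RX; infer_instance

/-- block-compatibility table for vertical coordinates -/
def RY (k : Fin 2) (i j : ZMod 8) : Prop :=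
  (i - (k.val : ZMod 8)).val / 2 = (j - (k.val : ZMod 8)).val / 2

instance (k : Fin 2) (i j : ZMod 8) : Decidable (RY k i j) := by unfold RY; infer_instance

/-- local relation on a cycle (or on the integers) -/
def Loc {N : ℕ} (π : ZMod N →+* ZMod 8) (R : Fin 2 → ZMod 8 → ZMod 8 → Prop)
    (k : Fin 2) (x y : ZMod N) : Prop :=
  ∃ d : Fin 7, y = x + (((d.val : ℤ) - 3 : ℤ) : ZMod N) ∧ R k (π x) (π y)

theorem Loc.trans {N : ℕ} (π : ZMod N →+* ZMod 8) (R : Fin 2 → ZMod 8 → ZMod 8 → Prop)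
    (hR : ∀ k i, ∀ d e : Fin 7, R k i (i + (((d.val : ℤ) - 3 : ℤ) : ZMod 8)) →
      R k (i + (((d.val : ℤ) - 3 : ℤ) : ZMod 8))
        (i + (((d.val : ℤ) - 3 : ℤ) : ZMod 8) + (((e.val : ℤ) - 3 : ℤ) : ZMod 8)) →
      (3 ≤ d.val + e.val ∧ d.val + e.val ≤ 9) ∧ R k i
        (i + (((d.val : ℤ) - 3 : ℤ) : ZMod 8) + (((e.val : ℤ) - 3 : ℤ) : ZMod 8)))
    (k : Fin 2) (x y z : ZMod N) (h1 : Loc π R k x y) (h2 : Loc π R k y z) : Loc π R k x z := by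
  obtain ⟨d, rfl, r1⟩ := h1
  obtain ⟨e, rfl, r2⟩ := h2
  simp only [map_add, map_intCast] at r1 r2
  obtain ⟨⟨l1, l2⟩, r⟩ := hR k _ d e r1 r2
  refine ⟨⟨d.val + e.val - 3, by omega⟩, ?_, ?_⟩
  · rw [add_assoc, ← Int.cast_add]
    congr 2
    simp only
    omega
  · rw [map_add, map_add, map_intCast, map_intCast]; exact r

theorem Loc.off {N : ℕ} {π : ZMod N →+* ZMod 8} {R : Fin 2 → ZMod 8 → ZMod 8 → Prop}
    {k : Fin 2} {x y : ZMod N} (h : Loc π R k x y) (e : Fin 7)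
    (he : π y = π x + (((e.val : ℤ) - 3 : ℤ) : ZMod 8)) :
    y = x + (((e.val : ℤ) - 3 : ℤ) : ZMod N) := by
  obtain ⟨d, rfl, -⟩ := h
  rw [map_add, map_intCast] at he
  have := add_left_cancel he
  have key : ∀ d e : Fin 7, (((d.val : ℤ) - 3 : ℤ) : ZMod 8) = (((e.val : ℤ) - 3 : ℤ) : ZMod 8) →
    d = e := by decide
  rw [key d e this]

theorem Loc.eq {N : ℕ} {π : ZMod N →+* ZMod 8} {R : Fin 2 → ZMod 8 → ZMod 8 → Prop}
    {k : Fin 2} {x y : ZMod N} (h : Loc π R k x y) (he : π y = π x) : y = x := by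
  have := h.off 3 (by simpa using he)
  simpa using this

theorem Loc.succ {N : ℕ} {π : ZMod N →+* ZMod 8} {R : Fin 2 → ZMod 8 → ZMod 8 → Prop}
    {k : Fin 2} {x y : ZMod N} (h : Loc π R k x y) (he : π y = π x + 1) : y = x + 1 := by
  have := h.off 4 (by simpa using he)
  simpa using this

theorem Loc.pred {N : ℕ} {π : ZMod N →+* ZMod 8} {R : Fin 2 → ZMod 8 → ZMod 8 → Prop}
    {k : Fin 2} {x y : ZMod N} (h : Loc π R k x y) (he : π x = π y + 1) : y = x - 1 := by
  have := h.off 2 (by simp [he])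
  simpa [sub_eq_add_neg] using this

theorem Loc.refl' {N : ℕ} {π : ZMod N →+* ZMod 8} {R : Fin 2 → ZMod 8 → ZMod 8 → Prop}
    (hR : ∀ k i, R k i i) (k : Fin 2) (x : ZMod N) : Loc π R k x x :=
  ⟨3, by simp, hR _ _⟩

theorem Loc.fwd {N : ℕ} {π : ZMod N →+* ZMod 8} {R : Fin 2 → ZMod 8 → ZMod 8 → Prop}
    {k : Fin 2} {x : ZMod N} (hR : R k (π x) (π x + 1)) : Loc π R k x (x + 1) :=
  ⟨4, by simp, by rwa [map_add, map_one]⟩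

theorem Loc.bwd {N : ℕ} {π : ZMod N →+* ZMod 8} {R : Fin 2 → ZMod 8 → ZMod 8 → Prop}
    {k : Fin 2} {x : ZMod N} (hR : R k (π x) (π x - 1)) : Loc π R k x (x - 1) :=
  ⟨2, by simp [sub_eq_add_neg], by rwa [map_sub, map_one]⟩

theorem RX_refl : ∀ k i, RX k i i := fun _ _ => Or.inl rfl
theorem RY_refl : ∀ k i, RY k i i := fun _ _ => rfl
theorem RX_s : ∀ i, RX (par i) i (i + 1) := by decide
theorem RX_p : ∀ i, RX (par i) (i + 1) i := by decide
theorem RY_s : ∀ i, RY (par i) i (i + 1) := by decide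
theorem RY_p : ∀ i, RY (par i) (i + 1) i := by decide
theorem RX_l : ∀ k i, dirL i → RX k (i + 1) i := by decide
theorem RX_r : ∀ k i, ¬ dirL i → RX k i (i + 1) := by decide

set_option maxRecDepth 100000 in
theorem RX_tr : ∀ k i, ∀ d e : Fin 7, RX k i (i + (((d.val : ℤ) - 3 : ℤ) : ZMod 8)) →
      RX k (i + (((d.val : ℤ) - 3 : ℤ) : ZMod 8))
        (i + (((d.val : ℤ) - 3 : ℤ) : ZMod 8) + (((e.val : ℤ) - 3 : ℤ) : ZMod 8)) →
      (3 ≤ d.val + e.val ∧ d.val + e.val ≤ 9) ∧ RX k i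
        (i + (((d.val : ℤ) - 3 : ℤ) : ZMod 8) + (((e.val : ℤ) - 3 : ℤ) : ZMod 8)) := by
  decide +kernel

set_option maxRecDepth 100000 in
theorem RY_tr : ∀ k i, ∀ d e : Fin 7, RY k i (i + (((d.val : ℤ) - 3 : ℤ) : ZMod 8)) →
      RY k (i + (((d.val : ℤ) - 3 : ℤ) : ZMod 8))
        (i + (((d.val : ℤ) - 3 : ℤ) : ZMod 8) + (((e.val : ℤ) - 3 : ℤ) : ZMod 8)) →
      (3 ≤ d.val + e.val ∧ d.val + e.val ≤ 9) ∧ RY k i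
        (i + (((d.val : ℤ) - 3 : ℤ) : ZMod 8) + (((e.val : ℤ) - 3 : ℤ) : ZMod 8)) := by
  decide +kernel

/-- the two relations of the intended model -/
def MT {N : ℕ} (π : ZMod N →+* ZMod 8) (k : Fin 2) (p q : ZMod N × ZMod N) : Prop :=
  Loc π RX k p.1 q.1 ∧ Loc π RY k p.2 q.2

theorem gridModel {N : ℕ} (π : ZMod N →+* ZMod 8) :
    Grid (fun i j (p : ZMod N × ZMod N) => π p.1 = i ∧ π p.2 = j) (MT π) where
  tr k x y z h1 h2 := ⟨Loc.trans π _ RX_tr k _ _ _ h1.1 h2.1, Loc.trans π _ RY_tr k _ _ _ h1.2 h2.2⟩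
  ini := ⟨(0, 0), by simp⟩
  hs := by
    rintro i j ⟨x, y⟩ ⟨rfl, rfl⟩
    exact ⟨(x + 1, y), by simp, Loc.fwd (RX_s _), Loc.refl' RY_refl _ _⟩
  hb := by
    rintro i j ⟨x, y⟩ ⟨hx, rfl⟩
    obtain rfl : i = π x - 1 := by rw [← add_sub_cancel_right i 1, ← hx]
    refine ⟨(x - 1, y), by simp, Loc.bwd ?_, Loc.refl' RY_refl _ _⟩
    have := RX_p (π x - 1)
    rwa [sub_add_cancel] at this
  vs := by
    rintro i j ⟨x, y⟩ ⟨rfl, rfl⟩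
    exact ⟨(x, y + 1), by simp, Loc.refl' RX_refl _ _, Loc.fwd (RY_s _)⟩
  vb := by
    rintro i j ⟨x, y⟩ ⟨rfl, hx⟩
    obtain rfl : j = π y - 1 := by rw [← add_sub_cancel_right j 1, ← hx]
    refine ⟨(x, y - 1), by simp, Loc.refl' RX_refl _ _, Loc.bwd ?_⟩
    have := RY_p (π y - 1)
    rwa [sub_add_cancel] at this
  an := by
    rintro k i j ⟨x, y⟩ ⟨rfl, rfl⟩ ⟨x', y'⟩ ⟨h1, h2⟩ ⟨h3, h4⟩
    exact Prod.ext (h3.eq h1).symm (h4.eq h2).symm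
  t1 := by
    rintro i j - hd ⟨x, y⟩ ⟨h0, rfl⟩ ⟨x', y'⟩ ⟨rfl, h2⟩ ⟨h3, h4⟩
    obtain rfl := h4.eq h2
    refine ⟨?_, Loc.refl' RY_refl _ _⟩
    have := RX_l (par (π y')) _ hd
    simp only at *
    rw [h3.pred h0]
    refine Loc.bwd ?_
    rwa [h0, add_sub_cancel_right]
  t2 := by
    rintro i j - hd ⟨x, y⟩ ⟨h0, h1⟩ ⟨x', y'⟩ ⟨rfl, h2⟩ ⟨h3, h4⟩
    obtain rfl := h4.eq (h2.trans h1.symm)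
    refine ⟨?_, Loc.refl' RY_refl _ _⟩
    have := RX_l (par (π x')) _ hd
    simp only at *
    obtain rfl := h3.pred h0
    refine Loc.bwd ?_
    rwa [h0, add_sub_cancel_right]
  t3 := by
    rintro i j - hd ⟨x, y⟩ ⟨rfl, rfl⟩ ⟨x', y'⟩ ⟨h0, h2⟩ ⟨h3, h4⟩
    obtain rfl := h4.eq h2
    refine ⟨?_, Loc.refl' RY_refl _ _⟩
    simp only at *
    obtain rfl := h3.succ h0
    exact Loc.fwd (RX_r _ _ hd)
  t4 := by
    rintro i j - hd ⟨x, y⟩ ⟨rfl, h1⟩ ⟨x', y'⟩ ⟨h0, h2⟩ ⟨h3, h4⟩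
    obtain rfl := h4.eq (h2.trans h1.symm)
    refine ⟨?_, Loc.refl' RY_refl _ _⟩
    simp only at *
    obtain rfl := h3.succ h0
    exact Loc.fwd (RX_r _ _ hd)
/-- the true sentence -/
def top0 : F 0 := .not (.fls (by omega))

/-- conjunction of a list of sentences -/
def conj : List (F 0) → F 0
  | [] => top0
  | φ :: l => .and φ (conj l)

theorem sat_conj {A : Type} (M : Str A) (v : Fin 0 → A) (l : List (F 0)) :
    Sat M (conj l) v ↔ ∀ φ ∈ l, Sat M φ v := by
  induction l with
  | nil => simp [conj, top0, Sat]
  | cons φ l ih => simp [conj, Sat, ih]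

/-- predicate index of a position type -/
def ti (i j : ZMod 8) : ℕ := i.val * 8 + j.val

theorem ti_lt (i j : ZMod 8) : ti i j < 64 := by
  have := ZMod.val_lt i; have := ZMod.val_lt j; unfold ti; omega

theorem ti_inj {i j i' j' : ZMod 8} (h : ti i j = ti i' j') : i = i' ∧ j = j' := by
  have := ZMod.val_lt i; have := ZMod.val_lt j
  have := ZMod.val_lt i'; have := ZMod.val_lt j'
  unfold ti at h
  exact ⟨ZMod.val_injective 8 (by omega), ZMod.val_injective 8 (by omega)⟩

def fIni (p : ℕ) : F 0 := .ex (by omega) (.patom p (by omega) (by omega))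

def fSucc (p : ℕ) (k : Fin 2) (q : ℕ) : F 0 :=
  .all (by omega) (.imp (.patom p (by omega) (by omega))
    (.ex (by omega) (.and (.patom q (by omega) (by omega)) (.batom k))))

def fAnti (p : ℕ) (k : Fin 2) : F 0 :=
  .all (by omega) (.imp (.patom p (by omega) (by omega))
    (.all (by omega) (.imp (.patom p (by omega) (by omega)) (.imp (.batom k) .eqatom))))

def fTrans (p : ℕ) (k : Fin 2) (q : ℕ) (l : Fin 2) : F 0 :=
  .all (by omega) (.imp (.patom p (by omega) (by omega))
    (.all (by omega) (.imp (.patom q (by omega) (by omega)) (.imp (.batom k) (.batom l)))))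

def fBad (e : ℕ × Fin 2 × ℕ) (c c' : ℕ) : F 0 :=
  .all (by omega) (.imp (.patom e.1 (by omega) (by omega)) (.imp (.patom (64 + c) (by omega) (by omega))
    (.all (by omega) (.imp (.patom e.2.2 (by omega) (by omega)) (.imp (.batom e.2.1)
      (.not (.patom (64 + c') (by omega) (by omega))))))))

def fDis : ℕ → F 1
  | 0 => .fls (by omega)
  | n + 1 => .or (.patom (64 + n) (by omega) (by omega)) (fDis n)

section
variable {A : Type} (M : Str A) (v : Fin 0 → A)

theorem sat_ini (p : ℕ) : Sat M (fIni p) v ↔ ∃ x, M.U p x := by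
  simp [fIni, Sat, Fin.snoc]

theorem sat_succ (p : ℕ) (k : Fin 2) (q : ℕ) : Sat M (fSucc p k q) v ↔
    ∀ x, M.U p x → ∃ y, M.U q y ∧ M.T k x y := by
  simp [fSucc, Sat, Fin.snoc]

theorem sat_anti (p : ℕ) (k : Fin 2) : Sat M (fAnti p k) v ↔
    ∀ x, M.U p x → ∀ y, M.U p y → M.T k x y → x = y := by
  simp [fAnti, Sat, Fin.snoc]

theorem sat_trans (p : ℕ) (k : Fin 2) (q : ℕ) (l : Fin 2) : Sat M (fTrans p k q l) v ↔
    ∀ x, M.U p x → ∀ y, M.U q y → M.T k x y → M.T l x y := by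
  simp [fTrans, Sat, Fin.snoc]

theorem sat_bad (e : ℕ × Fin 2 × ℕ) (c c' : ℕ) : Sat M (fBad e c c') v ↔
    ∀ x, M.U e.1 x → M.U (64 + c) x → ∀ y, M.U e.2.2 y → M.T e.2.1 x y → ¬ M.U (64 + c') y := by
  simp [fBad, Sat, Fin.snoc]

theorem sat_dis (n : ℕ) : Sat M (.all (by omega) (fDis n) : F 0) v ↔
    ∀ x, ∃ c < n, M.U (64 + c) x := by
  simp only [Sat]
  refine forall_congr' fun x => ?_
  induction n with
  | zero => simp [fDis, Sat]
  | succ n ih =>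
    simp only [fDis, Sat, ih]
    constructor
    · rintro (h | ⟨c, hc, h⟩)
      · exact ⟨n, by omega, by simpa [Fin.snoc] using h⟩
      · exact ⟨c, by omega, h⟩
    · rintro ⟨c, hc, h⟩
      by_cases hn : c = n
      · left; subst hn; simpa [Fin.snoc] using h
      · right; exact ⟨c, by omega, h⟩
end

/-- all coordinate pairs -/
noncomputable def allT : List (ZMod 8 × ZMod 8) := (Finset.univ : Finset (ZMod 8 × ZMod 8)).toList

open Classical in
/-- sentences attached to a position type -/
noncomputable def fixAt (w : ZMod 8 × ZMod 8) : List (F 0) :=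
  [fSucc (ti w.1 w.2) (par w.1) (ti (w.1+1) w.2),
   fSucc (ti (w.1+1) w.2) (par w.1) (ti w.1 w.2),
   fSucc (ti w.1 w.2) (par w.2) (ti w.1 (w.2+1)),
   fSucc (ti w.1 (w.2+1)) (par w.2) (ti w.1 w.2),
   fAnti (ti w.1 w.2) 0,
   fAnti (ti w.1 w.2) 1,
   if par w.1 ≠ par w.2 ∧ dirL w.1 then
     fTrans (ti (w.1+1) w.2) (par w.1) (ti w.1 w.2) (par w.2) else top0,
   if par w.1 ≠ par w.2 ∧ dirL w.1 then
     fTrans (ti (w.1+1) (w.2+1)) (par w.2) (ti w.1 (w.2+1)) (par w.1) else top0,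
   if par w.1 ≠ par w.2 ∧ ¬ dirL w.1 then
     fTrans (ti w.1 w.2) (par w.1) (ti (w.1+1) w.2) (par w.2) else top0,
   if par w.1 ≠ par w.2 ∧ ¬ dirL w.1 then
     fTrans (ti w.1 (w.2+1)) (par w.2) (ti (w.1+1) (w.2+1)) (par w.1) else top0]

noncomputable def fixed : F 0 := .and (fIni (ti 0 0)) (conj (allT.flatMap fixAt))

theorem sat_fixed {A : Type} (M : Str A) (v : Fin 0 → A) (htr : ∀ k, Transitive (M.T k)) :
    Sat M fixed v ↔ Grid (fun i j => M.U (ti i j)) M.T := by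
  have e : Sat M fixed v ↔ (∃ x, M.U (ti 0 0) x) ∧
      ∀ w : ZMod 8 × ZMod 8, ∀ φ ∈ fixAt w, Sat M φ v := by
    simp only [fixed, Sat, sat_ini, sat_conj, List.mem_flatMap, allT, Finset.mem_toList,
      Finset.mem_univ, true_and]
    refine and_congr_right fun _ => ⟨fun h w φ hφ => h φ ⟨w, hφ⟩, fun h φ ⟨w, hφ⟩ => h w φ hφ⟩
  have ht : Sat M top0 v := by simp [top0, Sat]
  have hite : ∀ (P : Prop) [Decidable P] (φ : F 0),
      Sat M (if P then φ else top0) v ↔ (P → Sat M φ v) := by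
    intro P _ φ
    split_ifs with h <;> simp [h, ht]
  rw [e]
  simp only [fixAt, List.forall_mem_cons, List.not_mem_nil, hite, sat_succ, sat_anti, sat_trans]
  constructor
  · rintro ⟨h0, h⟩
    exact
      { tr := fun k x y z => @htr k x y z
        ini := h0
        hs := fun i j => (h (i, j)).1
        hb := fun i j => (h (i, j)).2.1
        vs := fun i j => (h (i, j)).2.2.1
        vb := fun i j => (h (i, j)).2.2.2.1
        an := fun k i j => by
          fin_cases k
          · exact (h (i, j)).2.2.2.2.1
          · exact (h (i, j)).2.2.2.2.2.1
        t1 := fun i j a b => (h (i, j)).2.2.2.2.2.2.1 ⟨a, b⟩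
        t2 := fun i j a b => (h (i, j)).2.2.2.2.2.2.2.1 ⟨a, b⟩
        t3 := fun i j a b => (h (i, j)).2.2.2.2.2.2.2.2.1 ⟨a, b⟩
        t4 := fun i j a b => (h (i, j)).2.2.2.2.2.2.2.2.2.1 ⟨a, b⟩ }
  · intro G
    exact ⟨G.ini, fun w => ⟨G.hs _ _, G.hb _ _, G.vs _ _, G.vb _ _, G.an _ _ _, G.an _ _ _,
      fun a => G.t1 _ _ a.1 a.2, fun a => G.t2 _ _ a.1 a.2, fun a => G.t3 _ _ a.1 a.2,
      fun a => G.t4 _ _ a.1 a.2, by simp⟩⟩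

/-- conjunction of the constraints excluding a pair of tiles along a list of edges -/
def badL (L : List (ℕ × Fin 2 × ℕ)) (c c' : ℕ) : F 0 := conj (L.map fun e => fBad e c c')

/-- conjunction over all forbidden pairs of tiles -/
def loop (L : List (ℕ × Fin 2 × ℕ)) (n a : ℕ) : ℕ → F 0
  | 0 => top0
  | m + 1 => .and (if a / 2 ^ m % 2 = 1 then top0 else badL L (m / n) (m % n)) (loop L n a m)

theorem sat_loop {A : Type} (M : Str A) (v : Fin 0 → A) (L : List (ℕ × Fin 2 × ℕ)) (n a r : ℕ) :
    Sat M (loop L n a r) v ↔ ∀ m < r, a.testBit m = false → ∀ e ∈ L,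
      ∀ x, M.U e.1 x → M.U (64 + m / n) x → ∀ y, M.U e.2.2 y → M.T e.2.1 x y →
        ¬ M.U (64 + m % n) y := by
  have ht : Sat M top0 v := by simp [top0, Sat]
  induction r with
  | zero => simp [loop, ht]
  | succ r ih =>
    simp only [loop, Sat, ih, Nat.forall_lt_succ_right]
    rw [and_comm]
    refine and_congr_right fun _ => ?_
    rw [Nat.testBit_eq_decide_div_mod_eq]
    split_ifs with h
    · simp [h, ht]
    · simp only [badL, sat_conj, List.forall_mem_map, sat_bad, h, decide_false, forall_true_left]

noncomputable def LH : List (ℕ × Fin 2 × ℕ) :=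
  allT.map fun w => (ti w.1 w.2, par w.1, ti (w.1+1) w.2)
noncomputable def LV : List (ℕ × Fin 2 × ℕ) :=
  allT.map fun w => (ti w.1 w.2, par w.2, ti w.1 (w.2+1))

noncomputable def eta (n a b : ℕ) : F 0 :=
  .and fixed (.and (.all (by omega) (fDis n)) (.and (loop LH n a (n * n)) (loop LV n b (n * n))))

/-- the number encoding a matrix of bits -/
def mat {n : ℕ} (H : Fin n → Fin n → Bool) : ℕ :=
  ∑ i : Fin n, ∑ j : Fin n, if H i j then 2 ^ (i.val * n + j.val) else 0

theorem mat_bit {n : ℕ} (H : Fin n → Fin n → Bool) (i j : Fin n) :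
    (mat H).testBit (i.val * n + j.val) = H i j := by
  classical
  have inj : ∀ p q : Fin n × Fin n, p.1.val * n + p.2.val = q.1.val * n + q.2.val → p = q := by
    rintro ⟨a, b⟩ ⟨c, d⟩ h
    simp only at h
    have hn : 0 < n := by have := a.2; omega
    have h1 := congrArg (· / n) h
    have h2 := congrArg (· % n) h
    simp only [Nat.mul_add_mod_self_right, Nat.mod_eq_of_lt b.2, Nat.mod_eq_of_lt d.2] at h2
    rw [h2] at h
    have := Nat.eq_of_mul_eq_mul_right hn (Nat.add_right_cancel h)
    exact Prod.ext (Fin.ext this) (Fin.ext h2)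
  let S : Finset ℕ := ((Finset.univ : Finset (Fin n × Fin n)).filter fun p => H p.1 p.2 = true).image
    fun p => p.1.val * n + p.2.val
  have hS : mat H = ∑ m ∈ S, 2 ^ m := by
    rw [Finset.sum_image (fun p _ q _ h => inj p q h), Finset.sum_filter]
    rw [← Finset.univ_product_univ, Finset.sum_product]
    rfl
  have h1 := Finset.toFinset_bitIndices_sum_two_pow S
  rw [← hS] at h1
  have h2 : (mat H).testBit (i.val * n + j.val) = true ↔ H i j = true := by
    rw [← Nat.mem_bitIndices, ← List.mem_toFinset, h1]
    simp only [S, Finset.mem_image, Finset.mem_filter, Finset.mem_univ, true_and]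
    constructor
    · rintro ⟨p, hp, he⟩
      have := inj p (i, j) he
      subst this; exact hp
    · intro h; exact ⟨(i, j), h, rfl⟩
  exact Bool.eq_iff_iff.mpr h2

theorem loop_mat {A : Type} (M : Str A) (v : Fin 0 → A) (L : List (ℕ × Fin 2 × ℕ)) (n : ℕ)
    (H : Fin n → Fin n → Bool) :
    Sat M (loop L n (mat H) (n * n)) v ↔ ∀ c c' : Fin n, H c c' = false → ∀ e ∈ L,
      ∀ x, M.U e.1 x → M.U (64 + c.val) x → ∀ y, M.U e.2.2 y → M.T e.2.1 x y →
        ¬ M.U (64 + c'.val) y := by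
  rw [sat_loop]
  constructor
  · intro h c c' hc
    have hn : 0 < n := by have := c.2; omega
    have := h (c.val * n + c'.val) (by
      have h1 := c.2; have h2 := c'.2
      calc c.val * n + c'.val < c.val * n + n := by omega
        _ = (c.val + 1) * n := by ring
        _ ≤ n * n := Nat.mul_le_mul_right _ h1) (by rw [mat_bit]; exact hc)
    rwa [Nat.mul_add_mod_self_right, Nat.mod_eq_of_lt c'.2, mul_comm, Nat.mul_add_div hn,
      Nat.div_eq_of_lt c'.2, add_zero] at this
  · intro h m hm hb
    have hn : 0 < n := by
      rcases Nat.eq_zero_or_pos n with rfl | h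
      · omega
      · exact h
    have h1 : m / n < n := Nat.div_lt_of_lt_mul hm
    have h2 : m % n < n := Nat.mod_lt _ hn
    refine h ⟨m / n, h1⟩ ⟨m % n, h2⟩ ?_
    rw [← mat_bit H]
    simp only
    rwa [Nat.div_add_mod']

theorem maps_of_sat (T : TileSys) {A : Type} (M : Str A) (htr : ∀ k, Transitive (M.T k))
    (v0 : Fin 0 → A) (hs : Sat M (eta T.n (mat T.H) (mat T.V)) v0) :
    ∃ (P : (ZMod 8 × ZMod 8) × A → Prop) (_ : {w // P w}) (h v : {w // P w} → {w // P w}),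
      (∀ w, h (v w) = v (h w)) ∧ ∃ tl : {w // P w} → Fin T.n,
      (∀ w, T.H (tl w) (tl (h w)) = true) ∧ (∀ w, T.V (tl w) (tl (v w)) = true) := by
  simp only [eta, Sat] at hs
  obtain ⟨hF, hD, hH, hV⟩ := hs
  have G := (sat_fixed M v0 htr).1 hF
  have hD' := (sat_dis M v0 T.n).1 hD
  rw [loop_mat] at hH hV
  obtain ⟨h, v, hv, h1, v1⟩ := G.maps
  obtain ⟨x0, hx0⟩ := G.ini
  choose tl tl1 tl2 using hD'
  refine ⟨_, ⟨((0, 0), x0), hx0⟩, h, v, hv, fun w => ⟨tl w.1.2, tl1 _⟩, ?_, ?_⟩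
  · intro w
    by_contra hc
    have hm : (ti w.1.1.1 w.1.1.2, par w.1.1.1, ti (w.1.1.1+1) w.1.1.2) ∈ LH :=
      List.mem_map.2 ⟨w.1.1, by simp [allT], rfl⟩
    refine hH _ _ (by simpa using hc) _ hm w.1.2 w.2 (tl2 _) (h w).1.2 ?_ (h1 w).2 (tl2 _)
    have := (h w).2
    rw [(h1 w).1] at this
    exact this
  · intro w
    by_contra hc
    have hm : (ti w.1.1.1 w.1.1.2, par w.1.1.2, ti w.1.1.1 (w.1.1.2+1)) ∈ LV :=
      List.mem_map.2 ⟨w.1.1, by simp [allT], rfl⟩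
    refine hV _ _ (by simpa using hc) _ hm w.1.2 w.2 (tl2 _) (v w).1.2 ?_ (v1 w).2 (tl2 _)
    have := (v w).2
    rw [(v1 w).1] at this
    exact this

theorem sat_of_torus (T : TileSys) (t : ℕ) (ht : T.TilesTorus t) :
    ∃ M : Str (ZMod (8 * t) × ZMod (8 * t)), (∀ k, Transitive (M.T k)) ∧
      ∀ v0, Sat M (eta T.n (mat T.H) (mat T.V)) v0 := by
  obtain ⟨ρ, hρ⟩ := ht
  let π : ZMod (8 * t) →+* ZMod 8 := ZMod.castHom (dvd_mul_right 8 t) (ZMod 8)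
  let σ : ZMod (8 * t) →+* ZMod t := ZMod.castHom (dvd_mul_left t 8) (ZMod t)
  have G := gridModel π
  let M : Str (ZMod (8 * t) × ZMod (8 * t)) :=
    { U := fun m p => m = ti (π p.1) (π p.2) ∨ m = 64 + (ρ (σ p.1, σ p.2)).val
      T := MT π }
  have hU : (fun i j => M.U (ti i j)) = fun i j (p : ZMod (8 * t) × ZMod (8 * t)) => π p.1 = i ∧ π p.2 = j := by
    funext i j p
    apply propext
    constructor
    · rintro (h | h)
      · obtain ⟨rfl, rfl⟩ := ti_inj h; exact ⟨rfl, rfl⟩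
      · have := ti_lt i j; omega
    · rintro ⟨rfl, rfl⟩; exact Or.inl rfl
  have hti : ∀ i j p, M.U (ti i j) p ↔ π p.1 = i ∧ π p.2 = j := by
    intro i j p; exact iff_of_eq (congrFun (congrFun (congrFun hU i) j) p)
  have hc : ∀ (c : Fin T.n) p, M.U (64 + c.val) p → c = ρ (σ p.1, σ p.2) := by
    rintro c p (h | h)
    · have := ti_lt (π p.1) (π p.2); omega
    · exact Fin.ext (by omega)
  have htr : ∀ k, Transitive (M.T k) := fun k x y z => G.tr k x y z
  refine ⟨M, htr, fun v0 => ?_⟩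
  simp only [eta, Sat]
  refine ⟨(sat_fixed M v0 htr).2 (by rw [hU]; exact G), (sat_dis M v0 T.n).2 fun p =>
    ⟨_, (ρ (σ p.1, σ p.2)).2, Or.inr rfl⟩, ?_, ?_⟩
  · rw [loop_mat]
    intro c c' hb e he x hx hcx y hy hT hcy
    obtain ⟨w, -, rfl⟩ := List.mem_map.1 he
    simp only [hti] at hx hy
    have h1 : y.1 = x.1 + 1 := hT.1.succ (by rw [hx.1, hy.1])
    have h2 : y.2 = x.2 := hT.2.eq (by rw [hx.2, hy.2])
    rw [hc c x hcx, hc c' y hcy, h1, h2, map_add, map_one, (hρ _ _).1] at hb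
    exact absurd hb (by simp)
  · rw [loop_mat]
    intro c c' hb e he x hx hcx y hy hT hcy
    obtain ⟨w, -, rfl⟩ := List.mem_map.1 he
    simp only [hti] at hx hy
    have h1 : y.2 = x.2 + 1 := hT.2.succ (by rw [hx.2, hy.2])
    have h2 : y.1 = x.1 := hT.1.eq (by rw [hx.1, hy.1])
    rw [hc c x hcx, hc c' y hcy, h1, h2, map_add, map_one, (hρ _ _).2] at hb
    exact absurd hb (by simp)

theorem sat_iff (T : TileSys) : Satisfiable (eta T.n (mat T.H) (mat T.V)) ↔ T.TilesZ := by
  constructor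
  · rintro ⟨A, _, M, htr, hs⟩
    obtain ⟨P, b, h, v, hv, tl, h1, h2⟩ := maps_of_sat T M htr _ hs
    exact tilesZ_of_maps T b h v hv tl h1 h2
  · intro h
    obtain ⟨M, htr, hs⟩ := sat_of_torus T 0 h
    exact ⟨_, ⟨(0, 0)⟩, M, htr, hs _⟩

theorem finsat_iff (T : TileSys) : FinitelySatisfiable (eta T.n (mat T.H) (mat T.V)) ↔
    ∃ t : ℕ, 1 ≤ t ∧ T.TilesTorus t := by
  constructor
  · rintro ⟨A, _, _, M, htr, hs⟩
    obtain ⟨P, b, h, v, hv, tl, h1, h2⟩ := maps_of_sat T M htr _ hs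
    have : Finite {w // P w} := inferInstance
    exact torus_of_maps T b h v hv tl h1 h2
  · rintro ⟨t, ht, h⟩
    obtain ⟨M, htr, hs⟩ := sat_of_torus T t h
    have : NeZero (8 * t) := ⟨by omega⟩
    exact ⟨_, ⟨(0, 0)⟩, inferInstance, M, htr, hs _⟩

theorem pr_pair {f g : ℕ → ℕ} (hf : Primrec f) (hg : Primrec g) :
    Primrec fun x => Nat.pair (f x) (g x) := Primrec₂.natPair.comp hf hg

theorem pr_add {f : ℕ → ℕ} (k : ℕ) (hf : Primrec f) :
    Primrec fun x => k + f x := Primrec.nat_add.comp (Primrec.const k) hf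

theorem pr_conj (L : List (ℕ × Fin 2 × ℕ)) {f g : ℕ → ℕ} (hf : Primrec f) (hg : Primrec g) :
    Primrec fun x => encode (badL L (f x) (g x)) := by
  induction L with
  | nil => exact Primrec.const _
  | cons e L ih =>
    have hb : Primrec fun x => encode (fBad e (f x) (g x)) := by
      simp only [fBad, encode]
      have k := fun m : ℕ => Primrec.const (α := ℕ) m
      exact pr_pair (k _) (pr_pair (k _) (pr_pair (k _) (pr_pair (k _) (pr_pair
        (pr_pair (k _) (pr_add _ hf)) (pr_pair (k _) (pr_pair (k _) (pr_pair (k _) (pr_pair (k _)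
        (pr_pair (k _) (pr_pair (k _) (pr_pair (k _) (pr_add _ hg))))))))))))
    exact pr_pair (Primrec.const _) (pr_pair hb ih)

theorem pr_dis : Primrec fun n => encode (fDis n) := by
  have : Primrec fun n : ℕ => (Nat.rec (motive := fun _ => ℕ) (Nat.pair 3 0)
      (fun m ih => Nat.pair 6 (Nat.pair (Nat.pair 0 (64 + m)) ih)) n : ℕ) := by
    refine Primrec.nat_rec₁ _ ?_
    exact Primrec₂.natPair.comp (Primrec.const _) (Primrec₂.natPair.comp
      (Primrec₂.natPair.comp (Primrec.const _) (Primrec.nat_add.comp (Primrec.const _) Primrec.fst))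
      Primrec.snd)
  refine this.of_eq fun n => ?_
  induction n with
  | zero => rfl
  | succ n ih => simp only [fDis, encode, ← ih]

theorem pr_loop (L : List (ℕ × Fin 2 × ℕ)) {n a r : ℕ → ℕ} (hn : Primrec n) (ha : Primrec a)
    (hr : Primrec r) : Primrec fun x => encode (loop L (n x) (a x) (r x)) := by
  have hpow : Primrec₂ ((· ^ ·) : ℕ → ℕ → ℕ) := Primrec₂.unpaired'.1 Nat.Primrec.pow
  have hpair : Primrec fun z : ℕ => encode (badL L z.unpair.1 z.unpair.2) :=
    pr_conj L (Primrec.fst.comp Primrec.unpair) (Primrec.snd.comp Primrec.unpair)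
  have hm : Primrec fun z : ℕ × ℕ × ℕ => z.2.1 := Primrec.fst.comp Primrec.snd
  have hnz : Primrec fun z : ℕ × ℕ × ℕ => n z.1 := hn.comp Primrec.fst
  have haz : Primrec fun z : ℕ × ℕ × ℕ => a z.1 := ha.comp Primrec.fst
  have hbad : Primrec fun z : ℕ × ℕ × ℕ => encode (badL L (z.2.1 / n z.1) (z.2.1 % n z.1)) := by
    have := hpair.comp (Primrec₂.natPair.comp (Primrec.nat_div.comp hm hnz)
      (Primrec.nat_mod.comp hm hnz))
    exact this.of_eq fun z => by simp
  have hcond : PrimrecPred fun z : ℕ × ℕ × ℕ => a z.1 / 2 ^ z.2.1 % 2 = 1 :=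
    Primrec.eq.comp (Primrec.nat_mod.comp (Primrec.nat_div.comp haz
      (hpow.comp (Primrec.const 2) hm)) (Primrec.const 2)) (Primrec.const 1)
  have hstep : Primrec₂ fun (x : ℕ) (q : ℕ × ℕ) => Nat.pair 5 (Nat.pair
      (if a x / 2 ^ q.1 % 2 = 1 then encode top0 else encode (badL L (q.1 / n x) (q.1 % n x))) q.2) :=
    Primrec₂.natPair.comp (Primrec.const 5) (Primrec₂.natPair.comp
      (Primrec.ite hcond (Primrec.const _) hbad) (Primrec.snd.comp Primrec.snd))
  have := Primrec.nat_rec' hr (Primrec.const (encode top0)) hstep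
  refine this.of_eq fun x => ?_
  generalize r x = m
  induction m with
  | zero => rfl
  | succ m ih =>
    simp only [loop, encode, ← ih]
    split_ifs <;> rfl

/-- the reduction in the proof of Theorem 8.  There is a computable
map assigning to each tiling system `𝒞` a sentence `η_𝒞` of FL² with equality and two
distinguished transitive relations such that `η_𝒞` is satisfiable (with both
distinguished relations transitive) iff `𝒞` tiles `ℤ × ℤ`, and `η_𝒞` is finitely
satisfiable iff `𝒞` tiles a torus `ℤ_t × ℤ_t` for some `t ≥ 1`. -/
theorem tiling_reduction_to_flutedTwoTransEq :
    ∃ g : ℕ → ℕ, Computable g ∧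
      ∀ T : TileSys, ∃ η : F 0,
        g T.encode = encode η ∧
        (Satisfiable η ↔ T.TilesZ) ∧
        (FinitelySatisfiable η ↔ ∃ t : ℕ, 1 ≤ t ∧ T.TilesTorus t) := by
  refine ⟨fun N => encode (eta N.unpair.1 N.unpair.2.unpair.1 N.unpair.2.unpair.2), ?_, fun T =>
    ⟨eta T.n (mat T.H) (mat T.V), ?_, sat_iff T, finsat_iff T⟩⟩
  · have h1 : Primrec fun N : ℕ => N.unpair.1 := Primrec.fst.comp Primrec.unpair
    have h2 : Primrec fun N : ℕ => N.unpair.2 := Primrec.snd.comp Primrec.unpair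
    have h3 : Primrec fun N : ℕ => N.unpair.1 * N.unpair.1 := Primrec.nat_mul.comp h1 h1
    exact (pr_pair (Primrec.const 5) (pr_pair (Primrec.const (encode fixed))
      (pr_pair (Primrec.const 5) (pr_pair (pr_pair (Primrec.const 9) (pr_dis.comp h1))
        (pr_pair (Primrec.const 5) (pr_pair (pr_loop LH h1 (h1.comp h2) h3)
          (pr_loop LV h1 (h2.comp h2) h3))))))).to_comp
  · have : T.encode = Nat.pair T.n (Nat.pair (mat T.H) (mat T.V)) := rfl
    simp only [this, Nat.unpair_pair]


end FlutedTwoTransEq
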